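/- In normalized units (G = 1, m₁ + m₂ = 1, r₀ = 1), i.e. when θ satisfies θ'(t) = (1−e)^{−3/2}(1 − e·cos θ(t))², the solution satisfies θ(t + 2π(1+e)^{−3/2}) = θ(t) + 2π for all t ∈ ℝ; that is, the period of the motion equals 2π/(1+e)^{3/2}. -/

import Mathlib

open Real

/-!
The time an autonomous motion `θ' = f(θ)` needs to travel from `θ a` to `θ b` is `∫ dx / f(x)`
between these angles, so if `f` has period `P`, then `θ` advances by `P` in time `∫₀ᴾ dx / f(x)`.
For `f(x) = (1 - e cos x)²` Kepler's equation integrates `1 / f`: the mean anomaly has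
derivative `(1 - e²)^{3/2} / (1 - e cos x)²` and gains `2π` per revolution.
-/

section AutonomousODE

variable {f θ : ℝ → ℝ}

theorem integral_inv_eq_sub_of_hasDerivAt_comp (hf : Continuous f) (hf₀ : ∀ x, f x ≠ 0)
    (hθ : ∀ t, HasDerivAt θ (f (θ t)) t) (a b : ℝ) :
    ∫ x in θ a..θ b, (f x)⁻¹ = b - a := by
  have hθcont : Continuous θ := continuous_iff_continuousAt.2 fun t => (hθ t).continuousAt
  calc ∫ x in θ a..θ b, (f x)⁻¹
      = ∫ t in a..b, (f (θ t))⁻¹ * f (θ t) :=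
        (intervalIntegral.integral_comp_mul_deriv (fun t _ => hθ t)
          (hf.comp hθcont).continuousOn (hf.inv₀ hf₀)).symm
    _ = ∫ _ in a..b, (1 : ℝ) := by simp only [inv_mul_cancel₀ (hf₀ _)]
    _ = b - a := by simp

theorem eq_of_intervalIntegral_eq_zero {a b : ℝ} (hf : ContinuousOn f (Set.uIcc a b))
    (hf₀ : ∀ x ∈ Set.uIoo a b, f x ≠ 0) (hab : ∫ x in a..b, f x = 0) : a = b := by
  by_contra hne
  obtain ⟨c, hc_mem, hc⟩ := exists_eq_interval_average hne hf
  rw [interval_average_eq, hab, smul_zero] at hc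
  exact hf₀ c hc_mem hc

theorem apply_add_integral_inv_eq_add_of_periodic {P : ℝ} (hf : Continuous f) (hf₀ : ∀ x, f x ≠ 0)
    (hfP : Function.Periodic f P) (hθ : ∀ t, HasDerivAt θ (f (θ t)) t) (t : ℝ) :
    θ (t + ∫ x in 0..P, (f x)⁻¹) = θ t + P := by
  have hinv : Continuous fun x => (f x)⁻¹ := hf.inv₀ hf₀
  have hinvP : Function.Periodic (fun x => (f x)⁻¹) P := hfP.comp Inv.inv
  have hperiod : ∫ x in θ t..θ t + P, (f x)⁻¹ = ∫ x in 0..P, (f x)⁻¹ := by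
    simpa only [zero_add] using hinvP.intervalIntegral_add_eq (θ t) 0
  have helapsed := integral_inv_eq_sub_of_hasDerivAt_comp hf hf₀ hθ t
    (t + ∫ x in 0..P, (f x)⁻¹)
  refine (eq_of_intervalIntegral_eq_zero hinv.continuousOn
    (fun x _ => inv_ne_zero (hf₀ x)) ?_).symm
  rw [← intervalIntegral.integral_interval_sub_left (hinv.intervalIntegrable (θ t) _)
    (hinv.intervalIntegrable _ _), helapsed, hperiod, add_sub_cancel_left, sub_self]

end AutonomousODE

section Anomaly

/-- The eccentric anomaly at true anomaly `x` on an ellipse of eccentricity `e`, both angles being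
measured from the apoapsis (for `e < 0`: eccentricity `-e`, from the periapsis). It is written as
a perturbation of `x`, which unlike the half-angle formula
`tan (E / 2) = √((1 + e) / (1 - e)) * tan (x / 2)` is smooth on all of `ℝ`. -/
noncomputable def eccentricAnomaly (e x : ℝ) : ℝ :=
  x + 2 * arctan (e * sin x / (1 + √(1 - e ^ 2) - e * cos x))

/-- The mean anomaly at true anomaly `x`, measured from the apoapsis. This is Kepler's equation
`M = E + e * sin E` for the eccentric anomaly `E`, with `sin E` expressed through `x`. -/
noncomputable def meanAnomaly (e x : ℝ) : ℝ :=
  eccentricAnomaly e x + e * √(1 - e ^ 2) * (sin x / (1 - e * cos x))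

variable {e : ℝ}

theorem one_sub_sq_pos (he : |e| < 1) : 0 < 1 - e ^ 2 :=
  sub_pos.2 ((sq_lt_one_iff_abs_lt_one e).2 he)

theorem one_sub_mul_cos_pos (he : |e| < 1) (x : ℝ) : 0 < 1 - e * cos x := by
  have hlt : |e * cos x| < 1 := by
    rw [abs_mul]
    exact (mul_le_of_le_one_right (abs_nonneg e) (abs_cos_le_one x)).trans_lt he
  linarith [le_abs_self (e * cos x)]

theorem hasDerivAt_const_sub_mul_cos (c e x : ℝ) :
    HasDerivAt (fun x => c - e * cos x) (e * sin x) x := by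
  simpa using ((hasDerivAt_cos x).const_mul e).const_sub c

theorem hasDerivAt_eccentricAnomaly (he : |e| < 1) (x : ℝ) :
    HasDerivAt (eccentricAnomaly e) (√(1 - e ^ 2) / (1 - e * cos x)) x := by
  have hs_sq : √(1 - e ^ 2) ^ 2 = 1 - e ^ 2 := sq_sqrt (one_sub_sq_pos he).le
  have hs : 0 ≤ √(1 - e ^ 2) := sqrt_nonneg _
  have hD := one_sub_mul_cos_pos he x
  unfold eccentricAnomaly
  set s := √(1 - e ^ 2)
  have hB : 0 < 1 + s - e * cos x := by linarith
  have harctan := (((hasDerivAt_sin x).const_mul e).div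
    (hasDerivAt_const_sub_mul_cos (1 + s) e x) hB.ne').arctan
  refine ((hasDerivAt_id x).add (harctan.const_mul 2)).congr_deriv ?_
  have hsum_sq : 1 + (e * sin x / (1 + s - e * cos x)) ^ 2
      = 2 * (1 + s) * (1 - e * cos x) / (1 + s - e * cos x) ^ 2 := by
    field_simp
    linear_combination e ^ 2 * sin_sq_add_cos_sq x + hs_sq
  have hnum : e * cos x * (1 + s - e * cos x) - e * sin x * (e * sin x)
      = (1 + s) * (e * cos x - 1 + s) := by
    linear_combination -e ^ 2 * sin_sq_add_cos_sq x - hs_sq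
  rw [Pi.div_apply, hsum_sq, hnum]
  field_simp
  ring

theorem hasDerivAt_meanAnomaly (he : |e| < 1) (x : ℝ) :
    HasDerivAt (meanAnomaly e) (√(1 - e ^ 2) ^ 3 * ((1 - e * cos x) ^ 2)⁻¹) x := by
  have hs_sq : √(1 - e ^ 2) ^ 2 = 1 - e ^ 2 := sq_sqrt (one_sub_sq_pos he).le
  have hD := one_sub_mul_cos_pos he x
  refine ((hasDerivAt_eccentricAnomaly he x).add (((hasDerivAt_sin x).div
    (hasDerivAt_const_sub_mul_cos 1 e x) hD.ne').const_mul (e * √(1 - e ^ 2)))).congr_deriv ?_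
  field_simp
  linear_combination -√(1 - e ^ 2) * e ^ 2 * sin_sq_add_cos_sq x - √(1 - e ^ 2) * hs_sq

theorem meanAnomaly_add_two_pi (e x : ℝ) :
    meanAnomaly e (x + 2 * π) = meanAnomaly e x + 2 * π := by
  simp only [meanAnomaly, eccentricAnomaly, sin_add_two_pi, cos_add_two_pi]
  ring

theorem integral_inv_one_sub_mul_cos_sq (he : |e| < 1) :
    ∫ x in 0..2 * π, ((1 - e * cos x) ^ 2)⁻¹ = 2 * π * (1 - e ^ 2) ^ (-(3 : ℝ) / 2) := by
  have hpos : 0 < 1 - e ^ 2 := one_sub_sq_pos he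
  have hcont : Continuous fun x => √(1 - e ^ 2) ^ 3 * ((1 - e * cos x) ^ 2)⁻¹ :=
    continuous_const.mul <| Continuous.inv₀ (by fun_prop)
      fun x => (pow_pos (one_sub_mul_cos_pos he x) 2).ne'
  have hmean : √(1 - e ^ 2) ^ 3 * ∫ x in 0..2 * π, ((1 - e * cos x) ^ 2)⁻¹ = 2 * π := by
    rw [← intervalIntegral.integral_const_mul,
      intervalIntegral.integral_eq_sub_of_hasDerivAt (fun x _ => hasDerivAt_meanAnomaly he x)
        (hcont.intervalIntegrable _ _),
      sub_eq_iff_eq_add', ← meanAnomaly_add_two_pi, zero_add]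
  have hrpow : (1 - e ^ 2) ^ (-(3 : ℝ) / 2) = (√(1 - e ^ 2) ^ 3)⁻¹ := by
    rw [neg_div, rpow_neg hpos.le, rpow_div_two_eq_sqrt _ hpos.le]
    norm_cast
  rw [hrpow, ← div_eq_mul_inv, eq_div_iff (pow_pos (sqrt_pos.2 hpos) 3).ne', mul_comm, hmean]

end Anomaly

theorem angular_ode_period_normalized_general {e : ℝ} (he : |e| < 1) {θ : ℝ → ℝ}
    (hθ : ∀ t, HasDerivAt θ ((1 - e) ^ (-(3 : ℝ) / 2) * (1 - e * cos (θ t)) ^ 2) t) (t : ℝ) :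
    θ (t + 2 * π * (1 + e) ^ (-(3 : ℝ) / 2)) = θ t + 2 * π := by
  obtain ⟨hneg, hlt⟩ := abs_lt.1 he
  have hc : 0 < (1 - e) ^ (-(3 : ℝ) / 2) := rpow_pos_of_pos (sub_pos.2 hlt) _
  have hperiod : ∫ x in 0..2 * π, ((1 - e) ^ (-(3 : ℝ) / 2) * (1 - e * cos x) ^ 2)⁻¹
      = 2 * π * (1 + e) ^ (-(3 : ℝ) / 2) := by
    have hfactor : (1 - e ^ 2) ^ (-(3 : ℝ) / 2)
        = (1 - e) ^ (-(3 : ℝ) / 2) * (1 + e) ^ (-(3 : ℝ) / 2) := by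
      rw [← mul_rpow (by linarith) (by linarith)]
      ring_nf
    simp only [mul_inv]
    rw [intervalIntegral.integral_const_mul, integral_inv_one_sub_mul_cos_sq he, hfactor]
    field_simp
  rw [← hperiod]
  exact apply_add_integral_inv_eq_add_of_periodic
    (f := fun x => (1 - e) ^ (-(3 : ℝ) / 2) * (1 - e * cos x) ^ 2) (by fun_prop)
    (fun x => (mul_pos hc (pow_pos (one_sub_mul_cos_pos he x) 2)).ne')
    (fun x => by simp only [cos_add_two_pi]) hθ t

/-- In normalized units, the solution of `θ' = (1-e)^{-3/2} (1 - e cos θ)²`, `θ(0) = 0`,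
satisfies `θ(t + 2π(1+e)^{-3/2}) = θ(t) + 2π`; the period of the motion is `2π/(1+e)^{3/2}`. -/
theorem angular_ode_period_normalized (e : ℝ) (he₀ : 0 < e) (he₁ : e < 1)
    (θ : ℝ → ℝ) (hθdiff : Differentiable ℝ θ)
    (hθ' : ∀ t, deriv θ t = (1 - e) ^ (-(3 : ℝ) / 2) * (1 - e * Real.cos (θ t)) ^ 2)
    (hθ0 : θ 0 = 0) :
    ∀ t : ℝ, θ (t + 2 * π * (1 + e) ^ (-(3 : ℝ) / 2)) = θ t + 2 * π :=
  angular_ode_period_normalized_general (abs_lt.2 ⟨by linarith, he₁⟩)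
    fun t => hθ' t ▸ (hθdiff t).hasDerivAt
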